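/- Let 0 < α < 1. There exists a constant C (depending only on Ω, ω, α, n) such that for every continuous f : ℝⁿ → ℝ with ‖f‖_{Λ_α} < ∞, with support contained in the closure of Ω, and with ∫_{ℝⁿ} f = 0, the Bogovskiĭ field u of f is continuously differentiable on ℝⁿ, vanishes outside the closure of Ω, satisfies div u = f on Ω, and for all indices 1 ≤ i, j ≤ n one has ‖∂u_i/∂x_j‖_{Λ_α} ≤ C ‖f‖_{Λ_α}. -/

import Mathlib

open MeasureTheory Metric Set Filter Topology

/-- The inhomogeneous Hölder (Lipschitz-α) norm
`‖g‖_{Λ_α} = sup |g| + sup_{x ≠ y} |g(x) − g(y)|/|x−y|^α`. -/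
noncomputable def lambdaNorm (n : ℕ) (α : ℝ) (g : EuclideanSpace ℝ (Fin n) → ℝ) : ℝ :=
  (⨆ x : EuclideanSpace ℝ (Fin n), |g x|) +
  ⨆ p : {p : EuclideanSpace ℝ (Fin n) × EuclideanSpace ℝ (Fin n) // p.1 ≠ p.2},
    |g p.1.1 - g p.1.2| / ‖p.1.1 - p.1.2‖ ^ α

set_option linter.unusedSectionVars false
set_option linter.deprecated false

namespace Bog
open Module

variable {E : Type*} [NormedAddCommGroup E] [InnerProductSpace ℝ E] [FiniteDimensional ℝ E]
  [MeasurableSpace E] [BorelSpace E]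

/-- Quantitative properties of the mollifier. -/
structure WGood (w : E → ℝ) (R W : ℝ) : Prop where
  hR : 1 ≤ R
  hW : 1 ≤ W
  cd : ContDiff ℝ 1 w
  b0 : ∀ p, |w p| ≤ W
  b1 : ∀ p, ‖fderiv ℝ w p‖ ≤ W
  l0 : ∀ p q, |w p - w q| ≤ W * ‖p - q‖
  l1 : ∀ p q, ‖fderiv ℝ w p - fderiv ℝ w q‖ ≤ W * ‖p - q‖
  z0 : ∀ p, R < ‖p‖ → w p = 0
  z1 : ∀ p, R < ‖p‖ → fderiv ℝ w p = 0
  int1 : ∫ p, w p = 1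

/-- Quantitative properties of the datum. -/
structure FGood (f : E → ℝ) (R N α : ℝ) : Prop where
  a0 : 0 < α
  a1 : α < 1
  hN : 0 ≤ N
  cont : Continuous f
  b : ∀ x, |f x| ≤ N
  h : ∀ x y, |f x - f y| ≤ N * ‖x - y‖ ^ α
  z : ∀ x, R < ‖x‖ → f x = 0

/-- Volume of the unit ball. -/
noncomputable def V (E : Type*) [NormedAddCommGroup E] [InnerProductSpace ℝ E]
    [FiniteDimensional ℝ E] [MeasurableSpace E] [BorelSpace E] : ℝ :=
  (volume (closedBall (0 : E) 1)).toReal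

theorem V_nonneg : 0 ≤ V E := ENNReal.toReal_nonneg

theorem vol_closedBall (x : E) {r : ℝ} (hr : 0 ≤ r) :
    (volume (closedBall x r)).toReal = V E * r ^ finrank ℝ E := by
  rw [Measure.addHaar_closedBall' volume x hr, ENNReal.toReal_mul, V,
    ENNReal.toReal_ofReal (by positivity), mul_comm]

theorem norm_integral_ball_le {F : Type*} [NormedAddCommGroup F] [NormedSpace ℝ F]
    (g : E → F) (x : E) {A r : ℝ} (hr : 0 ≤ r)
    (hg : ∀ y, ‖x - y‖ ≤ r → ‖g y‖ ≤ A) (hz : ∀ y, r < ‖x - y‖ → g y = 0) :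
    ‖∫ y, g y‖ ≤ A * (V E * r ^ finrank ℝ E) := by
  have h1 : ∫ y in closedBall x r, g y = ∫ y, g y := by
    apply setIntegral_eq_integral_of_forall_compl_eq_zero
    intro y hy
    apply hz
    rw [mem_closedBall, dist_comm, dist_eq_norm] at hy
    linarith
  rw [← h1, ← vol_closedBall x hr]
  apply norm_setIntegral_le_of_norm_le_const
  · exact measure_closedBall_lt_top
  · intro y hy
    apply hg
    rwa [mem_closedBall, dist_comm, dist_eq_norm] at hy

/-- The point `y + (x-y)/s`. -/
noncomputable def P (s : ℝ) (x y : E) : E := y + s⁻¹ • (x - y)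

/-- derivative of the kernel. -/
noncomputable def DK (w : E → ℝ) (s : ℝ) (x y : E) : E →L[ℝ] E :=
  (s⁻¹ • fderiv ℝ w (P s x y)).smulRight (x - y) + w (P s x y) • ContinuousLinearMap.id ℝ E

theorem integral_P {F : Type*} [NormedAddCommGroup F] [NormedSpace ℝ F] (g : E → F) (x : E)
    {s : ℝ} (hs : 0 < s) (hs1 : s < 1) :
    ∫ y, g (P s x y) = (s / (1 - s)) ^ finrank ℝ E • ∫ p, g p := by
  have h1 : ∀ y, P s x y = (1 - s⁻¹) • y + s⁻¹ • x := by
    intro y; simp only [P]; module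
  simp_rw [h1]
  rw [Measure.integral_comp_smul volume (fun z => g (z + s⁻¹ • x)),
    integral_add_right_eq_self (fun z => g z)]
  congr 1
  have h2 : (1 - s⁻¹) = - ((1 - s) / s) := by field_simp; ring
  rw [h2, abs_inv, abs_pow, abs_neg, abs_of_pos (div_pos (by linarith) hs), ← inv_pow, inv_div]

theorem sub_of_P {s : ℝ} (hs : 0 < s) (x y : E) : x - y = s • (P s x y - y) := by
  simp only [P, add_sub_cancel_left, smul_smul]
  rw [mul_inv_cancel₀ hs.ne', one_smul]

theorem sub_of_P' {s : ℝ} (hs : 0 < s) (hs1 : s < 1) (x y : E) :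
    x - y = (s / (1 - s)) • (P s x y - x) := by
  have h : P s x y - x = ((1 - s) / s) • (x - y) := by
    have : (1 - s) / s = s⁻¹ - 1 := by field_simp
    rw [this]; simp only [P]; module
  rw [h, smul_smul, div_mul_div_cancel₀' (by linarith), div_self (by linarith), one_smul]
  
theorem P_sub {s : ℝ} (x x' y : E) : P s x y - P s x' y = s⁻¹ • (x - x') := by
  simp only [P]; module

theorem supp1 {s R : ℝ} (hs : 0 < s) {x y : E} (hP : ‖P s x y‖ ≤ R) (hy : ‖y‖ ≤ R) :
    ‖x - y‖ ≤ 2 * R * s := by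
  rw [sub_of_P hs x y, norm_smul, Real.norm_of_nonneg hs.le]
  have := norm_sub_le (P s x y) y
  nlinarith

theorem supp2 {s R : ℝ} (hs : 0 < s) (hs1 : s < 1) {x y : E} (hP : ‖P s x y‖ ≤ R)
    (hy : ‖y‖ ≤ R) : ‖x‖ ≤ R := by
  have h : x = (1 - s) • y + s • P s x y := by
    have := sub_of_P hs x y
    rw [← sub_eq_zero] at this ⊢
    rw [← this]; module
  rw [h]
  refine (norm_add_le _ _).trans ?_
  rw [norm_smul, norm_smul, Real.norm_of_nonneg hs.le, Real.norm_of_nonneg (by linarith)]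
  nlinarith

theorem supp3 {s R Q : ℝ} (hs : 0 < s) (hs1 : s ≤ 1/2) {x y : E} (hP : ‖P s x y‖ ≤ R)
    (hx : ‖x‖ ≤ Q) : ‖x - y‖ ≤ 2 * (R + Q) * s := by
  rw [sub_of_P' hs (by linarith) x y, norm_smul,
    Real.norm_of_nonneg (div_nonneg hs.le (by linarith))]
  have := norm_sub_le (P s x y) x
  have h2 : s / (1 - s) ≤ 2 * s := by
    rw [div_le_iff₀ (by linarith)]; nlinarith
  calc _ ≤ (2 * s) * (R + Q) := by gcongr; linarith
    _ = _ := by ring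

section
variable {w : E → ℝ} {R W : ℝ}

theorem DK_zero (hw : WGood w R W)
    {s : ℝ} {x y : E} (h : R < ‖P s x y‖) : DK w s x y = 0 := by
  simp [DK, hw.z0 _ h, hw.z1 _ h]

theorem DK_bound (hw : WGood w R W)
    {s Q : ℝ} (hs : 0 < s) {x y : E} (h : ‖x - y‖ ≤ Q * s) :
    ‖DK w s x y‖ ≤ (Q + 1) * W := by
  have hW := hw.hW
  unfold DK
  refine (norm_add_le _ _).trans ?_
  rw [ContinuousLinearMap.norm_smulRight_apply, norm_smul, norm_smul, norm_inv,
    Real.norm_of_nonneg hs.le]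
  have h1 := hw.b1 (P s x y)
  have h2 := hw.b0 (P s x y)
  have h3 : ‖ContinuousLinearMap.id ℝ E‖ ≤ 1 := ContinuousLinearMap.norm_id_le
  calc _ ≤ s⁻¹ * W * (Q * s) + W * 1 := by gcongr; exact h2
    _ = _ := by field_simp

theorem DK_lip (hw : WGood w R W)
    {s Q : ℝ} (hs : 0 < s) {x x' y : E} (h : ‖x - y‖ ≤ Q * s) :
    ‖DK w s x y - DK w s x' y‖ ≤ (Q + 2) * W * s⁻¹ * ‖x - x'‖ := by
  have hW := hw.hW
  have e : DK w s x y - DK w s x' y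
     = (s⁻¹ • (fderiv ℝ w (P s x y) - fderiv ℝ w (P s x' y))).smulRight (x - y)
      + (s⁻¹ • fderiv ℝ w (P s x' y)).smulRight (x - x')
      + (w (P s x y) - w (P s x' y)) • ContinuousLinearMap.id ℝ E := by
    ext v
    simp only [DK, ContinuousLinearMap.sub_apply, ContinuousLinearMap.add_apply,
      ContinuousLinearMap.smulRight_apply, ContinuousLinearMap.smul_apply, smul_eq_mul,
      ContinuousLinearMap.id_apply]
    module
  rw [e]
  refine (norm_add₃_le).trans ?_
  rw [ContinuousLinearMap.norm_smulRight_apply, ContinuousLinearMap.norm_smulRight_apply,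
    norm_smul, norm_smul, norm_smul, norm_inv, Real.norm_of_nonneg hs.le]
  have h0 := hw.l1 (P s x y) (P s x' y)
  have h1 := hw.b1 (P s x' y)
  have h2 := hw.l0 (P s x y) (P s x' y)
  have hp : ‖P s x y - P s x' y‖ = s⁻¹ * ‖x - x'‖ := by
    rw [P_sub, norm_smul, norm_inv, Real.norm_of_nonneg hs.le]
  rw [hp] at h0 h2
  have h3 : ‖ContinuousLinearMap.id ℝ E‖ ≤ 1 := ContinuousLinearMap.norm_id_le
  calc _ ≤ s⁻¹ * (W * (s⁻¹ * ‖x - x'‖)) * (Q * s) + s⁻¹ * W * ‖x - x'‖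
        + (W * (s⁻¹ * ‖x - x'‖)) * 1 := by gcongr; exact h2
    _ = _ := by field_simp; ring

theorem hcs (hw : WGood w R W)
    : HasCompactSupport w := by
  apply HasCompactSupport.intro (isCompact_closedBall (0:E) R)
  intro p hp
  apply hw.z0
  simpa using hp

theorem int_fderiv (hw : WGood w R W)
    (x : E) :
    ∫ p, (fderiv ℝ w p).smulRight (p - x) = - ContinuousLinearMap.id ℝ E := by
  have hc := hcs hw
  have hcf : HasCompactSupport (fderiv ℝ w) := hc.fderiv ℝ
  have c0 : Continuous w := hw.cd.continuous
  have c1 : Continuous (fderiv ℝ w) := hw.cd.continuous_fderiv (by norm_num)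
  have I : Integrable (fun p => (fderiv ℝ w p).smulRight (p - x)) := by
    apply Continuous.integrable_of_hasCompactSupport
    · fun_prop
    · apply hcf.mono
      intro p hp
      simp only [Function.mem_support] at hp ⊢
      intro h; apply hp; rw [h]; ext; simp
  ext1 v
  rw [ContinuousLinearMap.integral_apply I]
  have := integral_bilinear_hasLineDerivAt_right_eq_neg_left_of_integrable (μ := volume)
    (B := (ContinuousLinearMap.lsmul ℝ ℝ : ℝ →L[ℝ] E →L[ℝ] E).flip)
    (f := fun p : E => p - x) (f' := fun _ => v) (g := w) (g' := fun p => fderiv ℝ w p v) (v := v)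
    ?_ ?_ ?_ ?_ ?_
  · simp only [ContinuousLinearMap.flip_apply, ContinuousLinearMap.lsmul_apply] at this
    simp only [ContinuousLinearMap.smulRight_apply, this, integral_smul_const, hw.int1]
    simp
  · simp only [ContinuousLinearMap.flip_apply, ContinuousLinearMap.lsmul_apply]
    exact (c0.integrable_of_hasCompactSupport hc).smul_const v
  · simpa using I.apply_continuousLinearMap v
  · simp only [ContinuousLinearMap.flip_apply, ContinuousLinearMap.lsmul_apply]
    apply Continuous.integrable_of_hasCompactSupport
    · fun_prop
    · exact hc.smul_right
  · intro p _
    exact (((hasFDerivAt_id (𝕜 := ℝ) p).sub_const x).hasLineDerivAt v)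
  · intro p _
    exact ((hw.cd.differentiable (by norm_num)) p).hasFDerivAt.hasLineDerivAt v

theorem DK_integrable (hw : WGood w R W)
    {s : ℝ} (hs : 0 < s) (hs1 : s < 1) (x : E) :
    Integrable (fun y => DK w s x y) := by
  have c0 : Continuous w := hw.cd.continuous
  have c1 : Continuous (fderiv ℝ w) := hw.cd.continuous_fderiv (by norm_num)
  apply Continuous.integrable_of_hasCompactSupport
  · unfold DK P; fun_prop
  · apply HasCompactSupport.intro (isCompact_closedBall x (s / (1 - s) * (R + ‖x‖)))
    intro y hy
    apply DK_zero hw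
    by_contra! hP
    apply hy
    rw [mem_closedBall, dist_comm, dist_eq_norm, sub_of_P' hs hs1, norm_smul,
      Real.norm_of_nonneg (div_nonneg hs.le (by linarith))]
    have := norm_sub_le (P s x y) x
    have : 0 ≤ s / (1 - s) := div_nonneg hs.le (by linarith)
    gcongr
    linarith

theorem int_DK (hw : WGood w R W)
    {s : ℝ} (hs : 0 < s) (hs1 : s < 1) (x : E) :
    ∫ y, DK w s x y = -(s / (1 - s)) ^ (finrank ℝ E + 1) • ContinuousLinearMap.id ℝ E := by
  have c0 : Continuous w := hw.cd.continuous
  have c1 : Continuous (fderiv ℝ w) := hw.cd.continuous_fderiv (by norm_num)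
  have hc := hcs hw
  have e : ∀ y, DK w s x y = (fun p => (s⁻¹ * (s / (1 - s))) • (fderiv ℝ w p).smulRight (p - x)
      + w p • ContinuousLinearMap.id ℝ E) (P s x y) := by
    intro y
    simp only [DK]
    congr 1
    conv_lhs => rw [sub_of_P' hs hs1]
    ext v
    simp only [ContinuousLinearMap.smulRight_apply, ContinuousLinearMap.smul_apply, smul_smul,
      smul_eq_mul]
    congr 1; ring
  refine (integral_congr_ae (Eventually.of_forall e)).trans ((integral_P
    (fun p => (s⁻¹ * (s / (1 - s))) • (fderiv ℝ w p).smulRight (p - x)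
      + w p • ContinuousLinearMap.id ℝ E) x hs hs1).trans ?_)
  rw [integral_add, integral_smul, int_fderiv hw, integral_smul_const,
    hw.int1, one_smul]
  · have : (1 - s) ≠ 0 := by linarith
    rw [pow_succ, ← sub_eq_zero]
    have h3 : s⁻¹ * (s / (1 - s)) = 1 + s / (1 - s) := by field_simp; ring
    rw [h3]
    module
  · refine Integrable.smul (s⁻¹ * (s / (1 - s))) (f := fun p => (fderiv ℝ w p).smulRight (p - x)) ?_
    apply Continuous.integrable_of_hasCompactSupport
    · fun_prop
    · apply (hc.fderiv ℝ).mono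
      intro p hp
      simp only [Function.mem_support] at hp ⊢
      intro h; apply hp; rw [h]; ext; simp
  · exact (c0.integrable_of_hasCompactSupport hc).smul_const _
end
end Bog

namespace Bog
open Module

variable {E : Type*} [NormedAddCommGroup E] [InnerProductSpace ℝ E] [FiniteDimensional ℝ E]
  [MeasurableSpace E] [BorelSpace E]

/-- slice of the Bogovskii field. -/
noncomputable def U (w f : E → ℝ) (s : ℝ) (x : E) : E :=
  ∫ y, f y • (w (P s x y) • (x - y))

/-- derivative of slice of the Bogovskii field. -/
noncomputable def DU (w f : E → ℝ) (s : ℝ) (x : E) : E →L[ℝ] E :=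
  ∫ y, f y • DK w s x y

theorem rpow_scale {Q s α : ℝ} (hQ : 1 ≤ Q) (hs : 0 < s) (a1 : α < 1) :
    (Q * s) ^ α ≤ Q * s ^ α := by
  rw [Real.mul_rpow (by linarith) hs.le]
  gcongr
  calc Q ^ α ≤ Q ^ (1:ℝ) := Real.rpow_le_rpow_of_exponent_le hQ a1.le
    _ = Q := Real.rpow_one Q

theorem le_rpow {s α : ℝ} (hs : 0 < s) (hs1 : s < 1) (a1 : α < 1) : s ≤ s ^ α := by
  calc s = s ^ (1:ℝ) := (Real.rpow_one s).symm
    _ ≤ s ^ α := Real.rpow_le_rpow_of_exponent_ge hs hs1.le a1.le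

section
variable {w : E → ℝ} {R W : ℝ} {f : E → ℝ} {N α : ℝ}

theorem fDK_zero (hw : WGood w R W) (hf : FGood f R N α)
    {s : ℝ} {x y : E} (h : ¬ (‖P s x y‖ ≤ R ∧ ‖y‖ ≤ R)) : f y • DK w s x y = 0 := by
  by_cases h1 : ‖P s x y‖ ≤ R
  · rw [hf.z y (by by_contra! h2; exact h ⟨h1, h2⟩), zero_smul]
  · rw [DK_zero hw (by linarith), smul_zero]

theorem DU_zero (hw : WGood w R W) (hf : FGood f R N α)
    {s : ℝ} (hs : 0 < s) (hs1 : s < 1) {x : E} (hx : R < ‖x‖) : DU w f s x = 0 := by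
  unfold DU
  rw [← integral_zero E (E →L[ℝ] E)]
  congr 1
  ext1 y
  apply fDK_zero hw hf
  rintro ⟨h1, h2⟩
  exact absurd (supp2 hs hs1 h1 h2) (by linarith)

theorem fDK_integrable (hw : WGood w R W) (hf : FGood f R N α)
    {s : ℝ} (hs : 0 < s) (hs1 : s < 1) (x : E) :
    Integrable (fun y => f y • DK w s x y) := by
  have h := DK_integrable hw hs hs1 x
  apply Integrable.mono' (h.norm.const_mul N)
  · exact hf.cont.aestronglyMeasurable.smul h.aestronglyMeasurable
  · refine Eventually.of_forall fun y => ?_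
    rw [norm_smul]
    gcongr
    exact hf.b y

theorem cDK_integrable (hw : WGood w R W)
    {s : ℝ} (hs : 0 < s) (hs1 : s < 1) (x : E) (c : ℝ) :
    Integrable (fun y => c • DK w s x y) := by
  exact Integrable.smul c (DK_integrable hw hs hs1 x)

theorem DU_eq (hw : WGood w R W) (hf : FGood f R N α)
    {s : ℝ} (hs : 0 < s) (hs1 : s < 1) (x z : E) :
    DU w f s x = (∫ y, (f y - f z) • DK w s x y)
      + f z • (-(s / (1 - s)) ^ (finrank ℝ E + 1) • ContinuousLinearMap.id ℝ E) := by
  have h := DK_integrable hw hs hs1 x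
  rw [← int_DK hw hs hs1 x, ← integral_smul]
  simp_rw [sub_smul]
  rw [integral_sub (fDK_integrable hw hf hs hs1 x) (cDK_integrable hw hs hs1 x _)]
  simp only [DU, sub_add_cancel]

theorem DU_bound (hw : WGood w R W) (hf : FGood f R N α)
    {s : ℝ} (hs : 0 < s) (hs1 : s < 1) (x : E) :
    ‖DU w f s x‖ ≤ (2 * ((2*R+1) * W) * V E * (2*R)^finrank ℝ E +
      6*R*((6*R+1)*W)*V E*(6*R)^finrank ℝ E + 2 ^ (finrank ℝ E + 1)) * N
        * (s ^ finrank ℝ E * s ^ α) := by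
  have hR := hw.hR
  have hW := hw.hW
  have hN := hf.hN
  have hV := V_nonneg (E := E)
  have hsa := le_rpow hs hs1 hf.a1
  have hsa0 : 0 < s ^ α := by positivity
  set d := finrank ℝ E with hd
  have p1 : 0 ≤ 2 * ((2*R+1) * W) * V E * (2*R)^d * N * (s ^ d * s ^ α) := by positivity
  have p2 : 0 ≤ 6*R*((6*R+1)*W)*V E*(6*R)^d * N * (s ^ d * s ^ α) := by positivity
  have p3 : 0 ≤ 2 ^ (d + 1) * N * (s ^ d * s ^ α) := by positivity
  rcases lt_or_ge (1/2) s with h2 | h2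
  · have : ‖DU w f s x‖ ≤ N * ((2*R+1)*W) * (V E * (2*R*s)^d) := by
      apply norm_integral_ball_le (fun y => f y • DK w s x y) x (by positivity)
      · intro y hy
        rw [norm_smul]
        gcongr
        · exact hf.b y
        · exact DK_bound hw hs hy
      · intro y hy
        apply fDK_zero hw hf
        rintro ⟨h1, h2⟩
        exact absurd (supp1 hs h1 h2) (by linarith)
    have e : N * ((2*R+1)*W) * (V E * (2*R*s)^d) = ((2*R+1)*W) * V E * (2*R)^d * N * (s ^ d) * 1 := by
      rw [mul_pow]; ring
    have : N * ((2*R+1)*W) * (V E * (2*R*s)^d) ≤ 2 * ((2*R+1) * W) * V E * (2*R)^d * N * (s ^ d * s ^ α) := by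
      rw [e]
      calc _ ≤ ((2*R+1)*W) * V E * (2*R)^d * N * (s ^ d) * (2 * s ^ α) := by gcongr; linarith
        _ = _ := by ring
    linarith
  rcases lt_or_ge R ‖x‖ with hx | hx
  · rw [DU_zero hw hf hs hs1 hx, norm_zero]; linarith
  rw [DU_eq hw hf hs hs1 x x]
  refine (norm_add_le _ _).trans ?_
  have b1 : ‖∫ y, (f y - f x) • DK w s x y‖ ≤ N * (6*R*s^α) * ((6*R+1)*W) * (V E * (6*R*s)^d) := by
    apply norm_integral_ball_le (fun y => (f y - f x) • DK w s x y) x (by positivity)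
    · intro y hy
      rw [norm_smul]
      gcongr
      · refine (hf.h y x).trans ?_
        gcongr
        rw [norm_sub_rev]
        calc _ ≤ (6 * R * s) ^ α := by gcongr; exact hf.a0.le
          _ ≤ _ := rpow_scale (by linarith) hs hf.a1
      · exact DK_bound hw hs hy
    · intro y hy
      rw [DK_zero hw, smul_zero]
      by_contra! h
      have := supp3 hs h2 h (show ‖x‖ ≤ 2 * R by linarith)
      linarith
  have b2 : ‖f x • (-(s / (1 - s)) ^ (d + 1) • ContinuousLinearMap.id ℝ E)‖
      ≤ N * (2 ^ (d+1) * (s ^ d * s ^ α)) := by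
    rw [norm_smul, norm_smul, norm_neg, norm_pow, Real.norm_of_nonneg (div_nonneg hs.le (by linarith))]
    have h3 : ‖ContinuousLinearMap.id ℝ E‖ ≤ 1 := ContinuousLinearMap.norm_id_le
    have h4 : s / (1 - s) ≤ 2 * s := by
      rw [div_le_iff₀ (by linarith)]; nlinarith
    have h5 : 0 ≤ s / (1 - s) := div_nonneg hs.le (by linarith)
    calc _ ≤ N * ((2 * s) ^ (d+1) * 1) := by gcongr; exact hf.b x
      _ = N * (2 ^ (d+1) * (s ^ d * s)) := by rw [mul_pow]; ring
      _ ≤ _ := by gcongr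
  have e : N * (6*R*s^α) * ((6*R+1)*W) * (V E * (6*R*s)^d)
    = 6*R*((6*R+1)*W)*V E*(6*R)^d * N * (s ^ d * s ^ α) := by rw [mul_pow]; ring
  linarith

theorem DU_lip0 (hw : WGood w R W) (hf : FGood f R N α)
    {s : ℝ} (hs : 0 < s) (hs1 : s < 1) (x x' : E) (hx : ‖x‖ ≤ R) (hd : ‖x - x'‖ ≤ s) :
    ‖DU w f s x - DU w f s x'‖ ≤ (2 * ((7*R+2) * W) * V E * (7*R)^finrank ℝ E +
      7*R*((7*R+2)*W)*V E*(7*R)^finrank ℝ E) * N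
        * (s ^ finrank ℝ E * s ^ α) * s⁻¹ * ‖x - x'‖ := by
  have hR := hw.hR
  have hW := hw.hW
  have hN := hf.hN
  have hV := V_nonneg (E := E)
  have hsa := le_rpow hs hs1 hf.a1
  have hsa0 : 0 < s ^ α := by positivity
  set d := finrank ℝ E with hd
  have p1 : 0 ≤ 2 * ((7*R+2) * W) * V E * (7*R)^d * N * (s ^ d * s ^ α) * s⁻¹ * ‖x - x'‖ := by
    positivity
  have p2 : 0 ≤ 7*R*((7*R+2)*W)*V E*(7*R)^d * N * (s ^ d * s ^ α) * s⁻¹ * ‖x - x'‖ := by positivity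
  have tri : ∀ y, ‖x - y‖ ≤ ‖x - x'‖ + ‖x' - y‖ := fun y => norm_sub_le_norm_sub_add_norm_sub x x' y
  have hRs : s ≤ R * s := by nlinarith
  rcases lt_or_ge (1/2) s with h2 | h2
  · have : ‖DU w f s x - DU w f s x'‖
        ≤ N * ((7*R+2)*W * s⁻¹ * ‖x - x'‖) * (V E * (7*R*s)^d) := by
      unfold DU
      rw [← integral_sub (fDK_integrable hw hf hs hs1 x) (fDK_integrable hw hf hs hs1 x')]
      apply norm_integral_ball_le (fun y => f y • DK w s x y - f y • DK w s x' y) x (by positivity)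
      · intro y hy
        rw [← smul_sub, norm_smul]
        gcongr
        · exact hf.b y
        · exact DK_lip hw hs hy
      · intro y hy
        rw [fDK_zero hw hf, fDK_zero hw hf, sub_zero]
        · rintro ⟨h1, h2⟩
          have := supp1 hs h1 h2
          have := tri y
          linarith
        · rintro ⟨h1, h2⟩
          have := supp1 hs h1 h2
          linarith
    have e : N * ((7*R+2)*W * s⁻¹ * ‖x - x'‖) * (V E * (7*R*s)^d)
       = ((7*R+2)*W) * V E * (7*R)^d * N * (s ^ d * 1) * s⁻¹ * ‖x - x'‖ := by
      rw [mul_pow]; ring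
    have : N * ((7*R+2)*W * s⁻¹ * ‖x - x'‖) * (V E * (7*R*s)^d)
       ≤ 2 * ((7*R+2) * W) * V E * (7*R)^d * N * (s ^ d * s ^ α) * s⁻¹ * ‖x - x'‖ := by
      rw [e]
      calc _ ≤ ((7*R+2)*W) * V E * (7*R)^d * N * (s ^ d * (2 * s ^ α)) * s⁻¹ * ‖x - x'‖ := by
            gcongr; linarith
        _ = _ := by ring
    linarith
  rw [DU_eq hw hf hs hs1 x x, DU_eq hw hf hs hs1 x' x, add_sub_add_right_eq_sub]
  have I : ∀ z, Integrable (fun y => (f y - f x) • DK w s z y) := by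
    intro z
    simp_rw [sub_smul]
    exact (fDK_integrable hw hf hs hs1 z).sub (cDK_integrable hw hs hs1 z _)
  have hx' : ‖x'‖ ≤ 2 * R := by
    have := norm_sub_norm_le x' x
    rw [norm_sub_rev] at this
    linarith
  have b1 : ‖(∫ y, (f y - f x) • DK w s x y) - ∫ y, (f y - f x) • DK w s x' y‖
      ≤ N * (7*R*s^α) * ((7*R+2)*W * s⁻¹ * ‖x - x'‖) * (V E * (7*R*s)^d) := by
    rw [← integral_sub (I x) (I x')]
    apply norm_integral_ball_le
      (fun y => (f y - f x) • DK w s x y - (f y - f x) • DK w s x' y) x (by positivity)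
    · intro y hy
      rw [← smul_sub, norm_smul]
      gcongr
      · refine (hf.h y x).trans ?_
        gcongr
        rw [norm_sub_rev]
        calc _ ≤ (7 * R * s) ^ α := by gcongr; exact hf.a0.le
          _ ≤ _ := rpow_scale (by linarith) hs hf.a1
      · exact DK_lip hw hs hy
    · intro y hy
      rw [DK_zero hw, DK_zero hw, smul_zero, sub_zero]
      · by_contra! h
        have := supp3 hs h2 h hx'
        have := tri y
        linarith
      · by_contra! h
        have := supp3 hs h2 h (show ‖x‖ ≤ 2 * R by linarith)
        linarith
  have e : N * (7*R*s^α) * ((7*R+2)*W * s⁻¹ * ‖x - x'‖) * (V E * (7*R*s)^d)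
    = 7*R*((7*R+2)*W)*V E*(7*R)^d * N * (s ^ d * s ^ α) * s⁻¹ * ‖x - x'‖ := by
    rw [mul_pow]; ring
  linarith

theorem DU_lip (hw : WGood w R W) (hf : FGood f R N α)
    {s : ℝ} (hs : 0 < s) (hs1 : s < 1) (x x' : E) (hd : ‖x - x'‖ ≤ s) :
    ‖DU w f s x - DU w f s x'‖ ≤ (2 * ((7*R+2) * W) * V E * (7*R)^finrank ℝ E +
      7*R*((7*R+2)*W)*V E*(7*R)^finrank ℝ E) * N
        * (s ^ finrank ℝ E * s ^ α) * s⁻¹ * ‖x - x'‖ := by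
  rcases le_or_gt ‖x‖ R with h | h
  · exact DU_lip0 hw hf hs hs1 x x' h hd
  rcases le_or_gt ‖x'‖ R with h' | h'
  · rw [norm_sub_rev, norm_sub_rev x x']
    rw [norm_sub_rev] at hd
    exact DU_lip0 hw hf hs hs1 x' x h' hd
  · rw [DU_zero hw hf hs hs1 h, DU_zero hw hf hs hs1 h', sub_zero, norm_zero]
    have hR := hw.hR
    have hW := hw.hW
    have hN := hf.hN
    have hV := V_nonneg (E := E)
    positivity

end

/-- The main constant. -/
noncomputable def Cst (E : Type*) [NormedAddCommGroup E] [InnerProductSpace ℝ E]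
    [FiniteDimensional ℝ E] [MeasurableSpace E] [BorelSpace E] (R W : ℝ) : ℝ :=
  (2 * ((2*R+1) * W) * V E * (2*R)^finrank ℝ E +
      6*R*((6*R+1)*W)*V E*(6*R)^finrank ℝ E + 2 ^ (finrank ℝ E + 1)) +
  (2 * ((7*R+2) * W) * V E * (7*R)^finrank ℝ E +
      7*R*((7*R+2)*W)*V E*(7*R)^finrank ℝ E)

section
variable {w : E → ℝ} {R W : ℝ} {f : E → ℝ} {N α : ℝ}

theorem Cst_nonneg (hw : WGood w R W)
    : 0 ≤ Cst E R W := by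
  have hR := hw.hR
  have hW := hw.hW
  have hV := V_nonneg (E := E)
  unfold Cst
  positivity


theorem DU_bound' (hw : WGood w R W) (hf : FGood f R N α)
    {s : ℝ} (hs : 0 < s) (hs1 : s < 1) (x : E) :
    ‖(s ^ (finrank ℝ E + 1))⁻¹ • DU w f s x‖ ≤ Cst E R W * N * s ^ (α - 1) := by
  have hR := hw.hR
  have hW := hw.hW
  have hN := hf.hN
  have hV := V_nonneg (E := E)
  rw [norm_smul, norm_inv, norm_pow, Real.norm_of_nonneg hs.le, Real.rpow_sub_one hs.ne']
  calc _ ≤ (s ^ (finrank ℝ E + 1))⁻¹ * (Cst E R W * N * (s ^ finrank ℝ E * s ^ α)) := by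
        gcongr
        refine (DU_bound hw hf hs hs1 x).trans ?_
        gcongr
        unfold Cst
        exact le_add_of_nonneg_right (by positivity)
    _ = _ := by field_simp; ring

theorem DU_lip' (hw : WGood w R W) (hf : FGood f R N α)
    {s : ℝ} (hs : 0 < s) (hs1 : s < 1) (x x' : E) (hd : ‖x - x'‖ ≤ s) :
    ‖(s ^ (finrank ℝ E + 1))⁻¹ • DU w f s x - (s ^ (finrank ℝ E + 1))⁻¹ • DU w f s x'‖
      ≤ Cst E R W * N * ‖x - x'‖ * s ^ (α - 2) := by
  have hR := hw.hR
  have hW := hw.hW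
  have hN := hf.hN
  have hV := V_nonneg (E := E)
  rw [← smul_sub, norm_smul, norm_inv, norm_pow, Real.norm_of_nonneg hs.le, Real.rpow_sub hs,
    Real.rpow_two]
  calc _ ≤ (s ^ (finrank ℝ E + 1))⁻¹ *
          (Cst E R W * N * (s ^ finrank ℝ E * s ^ α) * s⁻¹ * ‖x - x'‖) := by
        gcongr
        refine (DU_lip hw hf hs hs1 x x' hd).trans ?_
        gcongr
        unfold Cst
        exact le_add_of_nonneg_left (by positivity)
    _ = _ := by field_simp; ring
end
end Bog

namespace Bog
open Module

variable {E : Type*} [NormedAddCommGroup E] [InnerProductSpace ℝ E] [FiniteDimensional ℝ E]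
  [MeasurableSpace E] [BorelSpace E]

/-- The field, with the order of integration exchanged. -/
noncomputable def BU (w f : E → ℝ) (x : E) : E :=
  ∫ s in Ioo (0:ℝ) 1, (s ^ (finrank ℝ E + 1))⁻¹ • U w f s x

/-- Its derivative. -/
noncomputable def BDU (w f : E → ℝ) (x : E) : E →L[ℝ] E :=
  ∫ s in Ioo (0:ℝ) 1, (s ^ (finrank ℝ E + 1))⁻¹ • DU w f s x

theorem int_rpow_Ioo {b β : ℝ} (hb : 0 < b) (hβ : -1 < β) :
    ∫ s in Ioo (0:ℝ) b, s ^ β = b ^ (β + 1) / (β + 1) := by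
  rw [← integral_Ioc_eq_integral_Ioo, ← intervalIntegral.integral_of_le hb.le,
    integral_rpow (Or.inl hβ), Real.zero_rpow (by linarith), sub_zero]

theorem int_rpow_Ico {b β : ℝ} (hb : 0 < b) (hb1 : b < 1) (hβ : β < -1) :
    IntegrableOn (fun s : ℝ => s ^ β) (Ico b 1) ∧
    ∫ s in Ico b 1, s ^ β ≤ b ^ (β + 1) / (-(β + 1)) := by
  have h0 : (0:ℝ) ∉ uIcc b 1 := by
    rw [uIcc_of_le hb1.le]; intro h; exact absurd h.1 (by linarith)
  constructor
  · have := intervalIntegral.intervalIntegrable_rpow (μ := volume) (r := β) (Or.inr h0)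
    rw [intervalIntegrable_iff_integrableOn_Ico_of_le hb1.le] at this
    exact this
  · rw [integral_Ico_eq_integral_Ioo, ← integral_Ioc_eq_integral_Ioo,
      ← intervalIntegral.integral_of_le hb1.le,
      integral_rpow (Or.inr ⟨by linarith, h0⟩), Real.one_rpow, ← neg_div_neg_eq]
    have : 0 < -(β + 1) := by linarith
    gcongr
    linarith

section
variable {w : E → ℝ} {R W : ℝ} {f : E → ℝ} {N α : ℝ}

theorem K_hasFDerivAt (hw : WGood w R W)
    (s : ℝ) (x y : E) :
    HasFDerivAt (fun x => w (P s x y) • (x - y)) (DK w s x y) x := by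
  have hP : HasFDerivAt (fun x => P s x y) (s⁻¹ • ContinuousLinearMap.id ℝ E) x := by
    unfold P
    exact (((hasFDerivAt_id (𝕜 := ℝ) x).sub_const y).const_smul s⁻¹).const_add y
  have hwd : HasFDerivAt w (fderiv ℝ w (P s x y)) (P s x y) :=
    (hw.cd.differentiable (by norm_num) _).hasFDerivAt
  have h := (hwd.comp x hP).smul ((hasFDerivAt_id (𝕜 := ℝ) x).sub_const y)
  refine HasFDerivAt.congr_fderiv h ?_
  ext v
  simp [DK, add_comm]

theorem DK_sm (hw : WGood w R W)
    (x : E) : StronglyMeasurable (fun q : ℝ × E => DK w q.1 x q.2) := by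
  have c0 : Continuous w := hw.cd.continuous
  have c1 : Continuous (fderiv ℝ w) := hw.cd.continuous_fderiv (by norm_num)
  have h : Continuous (fun q : ℝ × E => (q.1 • fderiv ℝ w (q.2 + q.1 • (x - q.2))).smulRight (x - q.2)
      + w (q.2 + q.1 • (x - q.2)) • ContinuousLinearMap.id ℝ E) := by fun_prop
  have m : Measurable (fun q : ℝ × E => (q.1⁻¹, q.2)) := by fun_prop
  exact h.stronglyMeasurable.comp_measurable m

theorem K_sm (hw : WGood w R W)
    (x : E) : StronglyMeasurable (fun q : ℝ × E => w (P q.1 x q.2) • (x - q.2)) := by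
  have c0 : Continuous w := hw.cd.continuous
  have h : Continuous (fun q : ℝ × E => w (q.2 + q.1 • (x - q.2)) • (x - q.2)) := by fun_prop
  have m : Measurable (fun q : ℝ × E => (q.1⁻¹, q.2)) := by fun_prop
  exact h.stronglyMeasurable.comp_measurable m


theorem fK_integrable (hw : WGood w R W) (hf : FGood f R N α)
    (s : ℝ) (x : E) :
    Integrable (fun y => f y • (w (P s x y) • (x - y))) := by
  have c0 : Continuous w := hw.cd.continuous
  have c1 := hf.cont
  apply Continuous.integrable_of_hasCompactSupport
  · unfold P; fun_prop
  · apply HasCompactSupport.intro (isCompact_closedBall (0:E) R)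
    intro y hy
    rw [hf.z y (by simpa using hy), zero_smul]

theorem U_hasFDerivAt (hw : WGood w R W) (hf : FGood f R N α)
    {s : ℝ} (hs : 0 < s) (hs1 : s < 1) (x : E) :
    HasFDerivAt (U w f s) (DU w f s x) x := by
  have c1 := hf.cont
  have hN := hf.hN
  unfold U DU
  apply hasFDerivAt_integral_of_dominated_of_fderiv_le (ball_mem_nhds x one_pos)
    (bound := (closedBall (0:E) R).indicator fun _ => N * ((s⁻¹ * (‖x‖ + 1 + R) + 1) * W))
  · exact Eventually.of_forall fun x => (fK_integrable hw hf s x).aestronglyMeasurable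
  · exact fK_integrable hw hf s x
  · exact (fDK_integrable hw hf hs hs1 x).aestronglyMeasurable
  · refine Eventually.of_forall fun y z hz => ?_
    by_cases hy : y ∈ closedBall (0:E) R
    · rw [indicator_of_mem hy, norm_smul]
      gcongr
      · exact hf.b y
      · apply DK_bound hw hs
        have h1 : ‖y‖ ≤ R := by simpa using hy
        have h2 : ‖z - x‖ < 1 := by simpa [dist_eq_norm] using hz
        have h3 : ‖z - y‖ ≤ ‖z - x‖ + ‖x‖ + ‖y‖ := by
          calc _ = ‖(z - x) + x - y‖ := by congr 1; abel
            _ ≤ ‖(z - x) + x‖ + ‖y‖ := norm_sub_le _ _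
            _ ≤ _ := by gcongr; exact norm_add_le _ _
        have h4 : s⁻¹ * (‖x‖ + 1 + R) * s = ‖x‖ + 1 + R := by field_simp
        rw [h4]; linarith
    · rw [indicator_of_notMem hy, hf.z y (by simpa using hy), zero_smul, norm_zero]
  · rw [integrable_indicator_iff measurableSet_closedBall]
    exact integrableOn_const measure_closedBall_lt_top.ne
  · refine Eventually.of_forall fun y z _ => ?_
    exact (K_hasFDerivAt hw s z y).const_smul (f y)

theorem U_bound (hw : WGood w R W) (hf : FGood f R N α)
    {s : ℝ} (hs : 0 < s) (x : E) :
    ∫ y, ‖f y • (w (P s x y) • (x - y))‖ ≤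
      s ^ (finrank ℝ E + 1) * (N * (W * (2 * R)) * (V E * (2 * R) ^ finrank ℝ E)) := by
  have hR := hw.hR
  have hW := hw.hW
  have hN := hf.hN
  have h := norm_integral_ball_le (fun y => ‖f y • (w (P s x y) • (x - y))‖) x
    (A := N * (W * (2 * R * s))) (r := 2 * R * s) (by positivity) ?_ ?_
  · refine (le_abs_self _).trans (h.trans (le_of_eq ?_))
    rw [mul_pow]; ring
  · intro y hy
    rw [norm_norm, norm_smul, norm_smul]
    gcongr
    · exact hf.b y
    · exact hw.b0 _
  · intro y hy
    rw [norm_eq_zero]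
    by_cases h1 : ‖P s x y‖ ≤ R
    · by_cases h2 : ‖y‖ ≤ R
      · exact absurd (supp1 hs h1 h2) (by linarith)
      · rw [hf.z y (by linarith), zero_smul]
    · rw [hw.z0 _ (by linarith), zero_smul, smul_zero]

theorem U_bound' (hw : WGood w R W) (hf : FGood f R N α)
    {s : ℝ} (hs : 0 < s) (x : E) :
    (s ^ (finrank ℝ E + 1))⁻¹ * ∫ y, ‖f y • (w (P s x y) • (x - y))‖ ≤
      N * (W * (2 * R)) * (V E * (2 * R) ^ finrank ℝ E) := by
  rw [inv_mul_le_iff₀ (by positivity)]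
  exact U_bound hw hf hs x

theorem U_sm (hw : WGood w R W) (hf : FGood f R N α)
    (x : E) : StronglyMeasurable (fun s : ℝ => (s ^ (finrank ℝ E + 1))⁻¹ • U w f s x) := by
  have m : Measurable (fun s : ℝ => (s ^ (finrank ℝ E + 1))⁻¹) := by fun_prop
  apply m.stronglyMeasurable.smul
  have := hf.cont
  have h2 : StronglyMeasurable (fun q : ℝ × E => f q.2) :=
    (Continuous.stronglyMeasurable (by fun_prop))
  exact (h2.smul (K_sm hw x)).integral_prod_right'

theorem DU_sm (hw : WGood w R W) (hf : FGood f R N α)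
    (x : E) :
    StronglyMeasurable (fun s : ℝ => (s ^ (finrank ℝ E + 1))⁻¹ • DU w f s x) := by
  have m : Measurable (fun s : ℝ => (s ^ (finrank ℝ E + 1))⁻¹) := by fun_prop
  apply m.stronglyMeasurable.smul
  have := hf.cont
  have h2 : StronglyMeasurable (fun q : ℝ × E => f q.2) :=
    (Continuous.stronglyMeasurable (by fun_prop))
  exact (h2.smul (DK_sm hw x)).integral_prod_right'

theorem fubini (hw : WGood w R W) (hf : FGood f R N α)
    (x : E) :
    ∫ y, f y • (∫ s in Ioo (0:ℝ) 1,
      ((s ^ finrank ℝ E)⁻¹ * w (y + s⁻¹ • (x - y))) • (s⁻¹ • (x - y))) = BU w f x := by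
  have e : ∀ y, f y • (∫ s in Ioo (0:ℝ) 1,
      ((s ^ finrank ℝ E)⁻¹ * w (y + s⁻¹ • (x - y))) • (s⁻¹ • (x - y)))
      = ∫ s in Ioo (0:ℝ) 1, (s ^ (finrank ℝ E + 1))⁻¹ • (f y • (w (P s x y) • (x - y))) := by
    intro y
    rw [← integral_smul]
    congr 1
    ext1 s
    simp only [smul_smul, P]
    congr 1
    rw [pow_succ, mul_inv]; ring
  simp_rw [e]
  rw [integral_integral_swap]
  · unfold BU U
    simp_rw [integral_smul]
  · have hsm : StronglyMeasurable (fun q : E × ℝ =>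
        (q.2 ^ (finrank ℝ E + 1))⁻¹ • (f q.1 • (w (P q.2 x q.1) • (x - q.1)))) := by
      have m : Measurable (fun q : E × ℝ => (q.2 ^ (finrank ℝ E + 1))⁻¹) := by fun_prop
      apply m.stronglyMeasurable.smul
      have := hf.cont
      have h2 : StronglyMeasurable (fun q : E × ℝ => f q.1) :=
        (Continuous.stronglyMeasurable (by fun_prop))
      exact h2.smul ((K_sm hw x).comp_measurable measurable_swap)
    refine (integrable_prod_iff' hsm.aestronglyMeasurable).2 ?_
    constructor
    · exact Eventually.of_forall fun s => Integrable.smul ((s ^ (finrank ℝ E + 1))⁻¹) (fK_integrable hw hf s x)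
    · have hm : StronglyMeasurable (fun s : ℝ => ∫ y, ‖(s ^ (finrank ℝ E + 1))⁻¹ • (f y • (w (P s x y) • (x - y)))‖) :=
        (hsm.norm.comp_measurable measurable_swap).integral_prod_right'
      apply IntegrableOn.of_bound (C := N * (W * (2 * R)) * (V E * (2 * R) ^ finrank ℝ E))
        measure_Ioo_lt_top hm.aestronglyMeasurable
      rw [ae_restrict_iff' measurableSet_Ioo]
      refine Eventually.of_forall fun s hs => ?_
      rw [Real.norm_of_nonneg (integral_nonneg fun _ => norm_nonneg _)]
      refine le_trans (le_of_eq ?_) (U_bound' hw hf hs.1 x)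
      rw [← integral_const_mul]
      congr 1
      ext1 y
      rw [norm_smul, norm_inv, norm_pow, Real.norm_of_nonneg hs.1.le]

theorem bound_int (hw : WGood w R W) (hf : FGood f R N α)
    : IntegrableOn (fun s : ℝ => Cst E R W * N * s ^ (α - 1)) (Ioo 0 1) := by
  apply Integrable.const_mul
  exact (intervalIntegral.integrableOn_Ioo_rpow_iff one_pos).2 (by linarith [hf.a0])

theorem DU_integrable (hw : WGood w R W) (hf : FGood f R N α)
    (x : E) :
    IntegrableOn (fun s : ℝ => (s ^ (finrank ℝ E + 1))⁻¹ • DU w f s x) (Ioo 0 1) := by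
  apply Integrable.mono' (bound_int hw hf) (DU_sm hw hf x).aestronglyMeasurable
  rw [ae_restrict_iff' measurableSet_Ioo]
  exact Eventually.of_forall fun s hs => DU_bound' hw hf hs.1 hs.2 x

theorem BU_hasFDerivAt (hw : WGood w R W) (hf : FGood f R N α)
    (x : E) : HasFDerivAt (BU w f) (BDU w f x) x := by
  unfold BU BDU
  apply hasFDerivAt_integral_of_dominated_of_fderiv_le (ball_mem_nhds x one_pos)
    (bound := fun s : ℝ => Cst E R W * N * s ^ (α - 1))
  · exact Eventually.of_forall fun x => (U_sm hw hf x).aestronglyMeasurable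
  · apply IntegrableOn.of_bound (C := N * (W * (2 * R)) * (V E * (2 * R) ^ finrank ℝ E))
        measure_Ioo_lt_top (U_sm hw hf x).aestronglyMeasurable
    rw [ae_restrict_iff' measurableSet_Ioo]
    refine Eventually.of_forall fun s hs => ?_
    refine le_trans ?_ (U_bound' hw hf hs.1 x)
    have := hs.1
    rw [norm_smul, norm_inv, norm_pow, Real.norm_of_nonneg hs.1.le]
    gcongr
    exact norm_integral_le_integral_norm _
  · exact (DU_sm hw hf x).aestronglyMeasurable
  · rw [ae_restrict_iff' measurableSet_Ioo]
    exact Eventually.of_forall fun s hs z _ => DU_bound' hw hf hs.1 hs.2 z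
  · exact bound_int hw hf
  · rw [ae_restrict_iff' measurableSet_Ioo]
    exact Eventually.of_forall fun s hs z _ => (U_hasFDerivAt hw hf hs.1 hs.2 z).const_smul _

theorem BDU_bound (hw : WGood w R W) (hf : FGood f R N α)
    (x : E) : ‖BDU w f x‖ ≤ Cst E R W * N / α := by
  have h : ‖BDU w f x‖ ≤ ∫ s in Ioo (0:ℝ) 1, Cst E R W * N * s ^ (α - 1) := by
    apply norm_integral_le_of_norm_le (bound_int hw hf)
    rw [ae_restrict_iff' measurableSet_Ioo]
    exact Eventually.of_forall fun s hs => DU_bound' hw hf hs.1 hs.2 x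
  rw [integral_const_mul, int_rpow_Ioo one_pos (by linarith [hf.a0])] at h
  refine h.trans (le_of_eq ?_)
  simp
  ring

theorem BDU_holder (hw : WGood w R W) (hf : FGood f R N α)
    (x x' : E) :
    ‖BDU w f x - BDU w f x'‖ ≤ Cst E R W * N * (2 / α + 1 / (1 - α)) * ‖x - x'‖ ^ α := by
  have hC := Cst_nonneg hw
  have hN := hf.hN
  have a0 := hf.a0
  have a1 : 0 < 1 - α := by linarith [hf.a1]
  set δ := ‖x - x'‖ with hδ
  rcases eq_or_lt_of_le (norm_nonneg (x - x')) with h0 | h0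
  · have : x = x' := by rw [← sub_eq_zero, ← norm_eq_zero]; exact h0.symm
    rw [this, sub_self, norm_zero]
    positivity
  have p1 : 0 ≤ Cst E R W * N * (2 / α) * δ ^ α := by positivity
  have p2 : 0 ≤ Cst E R W * N * (1 / (1 - α)) * δ ^ α := by positivity
  have split : Cst E R W * N * (2 / α + 1 / (1 - α)) * δ ^ α
    = Cst E R W * N * (2 / α) * δ ^ α + Cst E R W * N * (1 / (1 - α)) * δ ^ α := by ring
  rw [split]
  rcases le_or_gt 1 δ with h1 | h1
  · have := norm_sub_le (BDU w f x) (BDU w f x')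
    have b1 := BDU_bound hw hf x
    have b2 := BDU_bound hw hf x'
    have h2 : 1 ≤ δ ^ α := Real.one_le_rpow h1 a0.le
    have : Cst E R W * N * (2 / α) * 1 ≤ Cst E R W * N * (2 / α) * δ ^ α := by gcongr
    have e : Cst E R W * N * (2 / α) * 1 = Cst E R W * N / α + Cst E R W * N / α := by ring
    linarith
  · have i1 := DU_integrable hw hf x
    have i2 := DU_integrable hw hf x'
    have i3 := i1.sub i2
    have hU : Ioo (0:ℝ) 1 = Ioo 0 δ ∪ Ico δ 1 := (Ioo_union_Ico_eq_Ioo h0 h1.le).symm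
    have e : BDU w f x - BDU w f x' = ∫ s in Ioo (0:ℝ) 1,
        ((s ^ (finrank ℝ E + 1))⁻¹ • DU w f s x - (s ^ (finrank ℝ E + 1))⁻¹ • DU w f s x') :=
      (integral_sub i1 i2).symm
    have i3 : IntegrableOn (fun s : ℝ => ((s ^ (finrank ℝ E + 1))⁻¹ • DU w f s x -
      (s ^ (finrank ℝ E + 1))⁻¹ • DU w f s x')) (Ioo 0 1) := i1.sub i2
    rw [hU] at e i3
    rw [setIntegral_union (by
      rw [Set.disjoint_left]; intro s hs hs'; exact absurd hs.2 (not_lt.2 hs'.1)) measurableSet_Ico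
      (i3.mono_set subset_union_left) (i3.mono_set subset_union_right)] at e
    rw [e]
    refine (norm_add_le _ _).trans (add_le_add ?_ ?_)
    · have h := norm_integral_le_of_norm_le (μ := volume.restrict (Ioo 0 δ))
        (f := fun s : ℝ => ((s ^ (finrank ℝ E + 1))⁻¹ • DU w f s x -
          (s ^ (finrank ℝ E + 1))⁻¹ • DU w f s x'))
        (g := fun s : ℝ => 2 * (Cst E R W * N) * s ^ (α - 1)) ?_ ?_
      · refine h.trans (le_of_eq ?_)
        rw [integral_const_mul, int_rpow_Ioo h0 (by linarith), sub_add_cancel]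
        ring
      · apply Integrable.const_mul
        exact (intervalIntegral.integrableOn_Ioo_rpow_iff h0).2 (by linarith [hf.a0])
      · rw [ae_restrict_iff' measurableSet_Ioo]
        refine Eventually.of_forall fun s hs => ?_
        have b1 := DU_bound' hw hf hs.1 (hs.2.trans h1) x
        have b2 := DU_bound' hw hf hs.1 (hs.2.trans h1) x'
        refine (norm_sub_le _ _).trans ?_
        linarith
    · obtain ⟨j1, j2⟩ := int_rpow_Ico h0 h1 (β := α - 2) (by linarith)
      have h := norm_integral_le_of_norm_le (μ := volume.restrict (Ico δ 1))
        (f := fun s : ℝ => ((s ^ (finrank ℝ E + 1))⁻¹ • DU w f s x -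
          (s ^ (finrank ℝ E + 1))⁻¹ • DU w f s x'))
        (g := fun s : ℝ => (Cst E R W * N * δ) * s ^ (α - 2)) ?_ ?_
      · refine h.trans ?_
        rw [integral_const_mul]
        calc _ ≤ (Cst E R W * N * δ) * (δ ^ (α - 2 + 1) / (-(α - 2 + 1))) := by gcongr
          _ = _ := by
            have e1 : α - 2 + 1 = α - 1 := by ring
            rw [e1, Real.rpow_sub_one h0.ne', neg_sub]
            field_simp
            rw [← hδ]
      · exact j1.const_mul _
      · rw [ae_restrict_iff' measurableSet_Ico]
        refine Eventually.of_forall fun s hs => ?_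
        exact DU_lip' hw hf (h0.trans_le hs.1) hs.2 x x' hs.1

theorem BU_contDiff (hw : WGood w R W) (hf : FGood f R N α)
    : ContDiff ℝ 1 (BU w f) := by
  rw [contDiff_one_iff_fderiv]
  refine ⟨fun x => (BU_hasFDerivAt hw hf x).differentiableAt, ?_⟩
  have e : fderiv ℝ (BU w f) = BDU w f := funext fun x => (BU_hasFDerivAt hw hf x).fderiv
  rw [e]
  rw [continuous_iff_continuousAt]
  intro x
  rw [ContinuousAt, tendsto_iff_norm_sub_tendsto_zero]
  have a0 := hf.a0
  have t : Tendsto (fun z => Cst E R W * N * (2 / α + 1 / (1 - α)) * ‖z - x‖ ^ α) (𝓝 x) (𝓝 0) := by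
    have c : Continuous (fun z => Cst E R W * N * (2 / α + 1 / (1 - α)) * ‖z - x‖ ^ α) := by
      apply Continuous.mul continuous_const
      exact Continuous.rpow_const (by fun_prop) (fun _ => Or.inr a0.le)
    have := c.tendsto x
    simpa [Real.zero_rpow a0.ne'] using this
  exact squeeze_zero (fun _ => norm_nonneg _) (fun z => BDU_holder hw hf z x) t
end
end Bog

namespace Bog
open Module

variable {E : Type*} [NormedAddCommGroup E] [InnerProductSpace ℝ E] [FiniteDimensional ℝ E]
  [MeasurableSpace E] [BorelSpace E]

/-- The approximate-identity average used for the divergence. -/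
noncomputable def Av (w f : E → ℝ) (x : E) (s : ℝ) : ℝ :=
  ∫ y, f y * ((s ^ finrank ℝ E)⁻¹ * w (P s x y))

theorem hasDerivAt_inv_pow (d : ℕ) {s : ℝ} (hs : 0 < s) :
    HasDerivAt (fun s : ℝ => (s ^ d)⁻¹) (-(d * (s ^ (d + 1))⁻¹)) s := by
  have h := (hasDerivAt_pow d s).inv (by positivity)
  refine h.congr_deriv ?_
  rcases d with _ | k
  · simp
  · simp only [Nat.add_sub_cancel]
    field_simp
    ring

section
variable {w : E → ℝ} {R W : ℝ} {f : E → ℝ} {N α : ℝ}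

theorem Av_pt (hw : WGood w R W) (τ : (E →L[ℝ] E) →L[ℝ] ℝ) (h1 : ∀ (l : E →L[ℝ] ℝ) (v : E), τ (l.smulRight v) = l v) (h2 : τ (ContinuousLinearMap.id ℝ E) = finrank ℝ E)
    (x y : E) {s : ℝ} (hs : 0 < s) :
    HasDerivAt (fun s : ℝ => (s ^ finrank ℝ E)⁻¹ * w (P s x y))
      (-((s ^ (finrank ℝ E + 1))⁻¹ * τ (DK w s x y))) s := by
  have hP : HasDerivAt (fun s => P s x y) ((-(s ^ 2)⁻¹) • (x - y)) s := by
    unfold P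
    exact ((hasDerivAt_inv hs.ne').smul_const (x - y)).const_add y
  have hwd : HasFDerivAt w (fderiv ℝ w (P s x y)) (P s x y) :=
    (hw.cd.differentiable (by norm_num) _).hasFDerivAt
  have h := (hasDerivAt_inv_pow (finrank ℝ E) hs).mul (hwd.comp_hasDerivAt s hP)
  refine h.congr_deriv ?_
  simp only [DK, map_add, map_smul, h1, h2, smul_eq_mul, Function.comp]
  simp only [ContinuousLinearMap.smul_apply, smul_eq_mul]
  field_simp
  ring


theorem Av_hasDerivAt (hw : WGood w R W) (hf : FGood f R N α) (τ : (E →L[ℝ] E) →L[ℝ] ℝ) (h1 : ∀ (l : E →L[ℝ] ℝ) (v : E), τ (l.smulRight v) = l v) (h2 : τ (ContinuousLinearMap.id ℝ E) = finrank ℝ E)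
    (x : E) {s : ℝ} (hs : 0 < s) :
    HasDerivAt (Av w f x) (∫ y, f y * (-((s ^ (finrank ℝ E + 1))⁻¹ * τ (DK w s x y)))) s := by
  have c0 : Continuous w := hw.cd.continuous
  have c1 : Continuous (fderiv ℝ w) := hw.cd.continuous_fderiv (by norm_num)
  have c2 := hf.cont
  have hN := hf.hN
  have hW := hw.hW
  have cP : ∀ s : ℝ, Continuous fun y => f y * ((s ^ finrank ℝ E)⁻¹ * w (P s x y)) := by
    intro s; unfold P; fun_prop
  unfold Av
  refine (hasDerivAt_integral_of_dominated_loc_of_deriv_le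
    (F := fun s y => f y * ((s ^ finrank ℝ E)⁻¹ * w (P s x y)))
    (F' := fun s y => f y * (-((s ^ (finrank ℝ E + 1))⁻¹ * τ (DK w s x y))))
    (Ioi_mem_nhds (show s / 2 < s by linarith))
    (bound := (closedBall (0:E) R).indicator fun _ => N * ((((s/2) ^ (finrank ℝ E + 1))⁻¹ *
      (‖τ‖ * (((s/2)⁻¹ * (‖x‖ + R) + 1) * W))))) ?_ ?_ ?_ ?_ ?_ ?_).2
  · exact Eventually.of_forall fun s => (cP s).aestronglyMeasurable
  · apply (cP s).integrable_of_hasCompactSupport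
    apply HasCompactSupport.intro (isCompact_closedBall (0:E) R)
    intro y hy
    rw [hf.z y (by simpa using hy), zero_mul]
  · apply Continuous.aestronglyMeasurable
    unfold DK P
    fun_prop
  · refine Eventually.of_forall fun y t ht => ?_
    have ht' : s / 2 < t := ht
    have ht0 : 0 < t := by linarith
    by_cases hy : y ∈ closedBall (0:E) R
    · rw [indicator_of_mem hy, norm_mul, norm_neg, norm_mul, norm_inv, norm_pow,
        Real.norm_of_nonneg ht0.le]
      have hyR : ‖y‖ ≤ R := by simpa using hy
      have hb : ‖DK w t x y‖ ≤ ((s/2)⁻¹ * (‖x‖ + R) + 1) * W := by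
        apply DK_bound hw ht0
        have := norm_sub_le x y
        calc _ ≤ ‖x‖ + R := by linarith
          _ = (s/2)⁻¹ * (‖x‖ + R) * (s/2) := by field_simp
          _ ≤ _ := by
            have := hw.hR
            gcongr
      gcongr
      · exact hf.b y
      · exact (τ.le_opNorm _).trans (by gcongr)
    · rw [indicator_of_notMem hy, hf.z y (by simpa using hy), zero_mul, norm_zero]
  · rw [integrable_indicator_iff measurableSet_closedBall]
    exact integrableOn_const measure_closedBall_lt_top.ne
  · refine Eventually.of_forall fun y t ht => ?_
    have ht' : s / 2 < t := ht
    exact (Av_pt hw τ h1 h2 x y (by linarith)).const_mul (f y)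

theorem Av_hasDerivAt' (hw : WGood w R W) (hf : FGood f R N α) (τ : (E →L[ℝ] E) →L[ℝ] ℝ) (h1 : ∀ (l : E →L[ℝ] ℝ) (v : E), τ (l.smulRight v) = l v) (h2 : τ (ContinuousLinearMap.id ℝ E) = finrank ℝ E)
    (x : E) {s : ℝ} (hs : 0 < s) (hs1 : s < 1) :
    HasDerivAt (Av w f x) (-(τ ((s ^ (finrank ℝ E + 1))⁻¹ • DU w f s x))) s := by
  refine (Av_hasDerivAt hw hf τ h1 h2 x hs).congr_deriv ?_
  rw [map_smul, DU, ← τ.integral_comp_comm (fDK_integrable hw hf hs hs1 x), smul_eq_mul,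
    ← integral_const_mul, ← integral_neg]
  congr 1
  ext1 y
  rw [map_smul, smul_eq_mul]
  ring

theorem Av_tendsto (hw : WGood w R W) (hf : FGood f R N α)
    (x : E) : Tendsto (Av w f x) (𝓝[>] 0) (𝓝 (f x)) := by
  have c0 : Continuous w := hw.cd.continuous
  have c2 := hf.cont
  have hN := hf.hN
  have hW := hw.hW
  have hR := hw.hR
  have hV := V_nonneg (E := E)
  set d := finrank ℝ E with hd
  have key : ∀ s ∈ Ioo (0:ℝ) (1/2), ‖Av w f x s - f x * ((1 - s) ^ d)⁻¹‖
      ≤ N * W * (V E * (2 * (R + ‖x‖)) ^ d) * (2 * (R + ‖x‖) * s) ^ α := by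
    intro s hs
    have hs0 := hs.1
    have hs2 := hs.2
    have i0 : Integrable (fun y => w (P s x y)) := by
      have e : (fun y => w (P s x y)) = fun y => w ((1 - s⁻¹) • y + s⁻¹ • x) := by
        ext y; congr 1; simp only [P]; module
      rw [e]
      have hi : Integrable (fun y => w (y + s⁻¹ • x)) :=
        (c0.integrable_of_hasCompactSupport (hcs hw)).comp_add_right (s⁻¹ • x)
      have hne : (1 - s⁻¹) ≠ 0 := by
        have : 1 < s⁻¹ := by rw [one_lt_inv₀ hs0]; linarith
        linarith
      exact (integrable_comp_smul_iff volume (fun y => w (y + s⁻¹ • x)) hne).2 hi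
    have e1 : ∫ y, f x * ((s ^ d)⁻¹ * w (P s x y)) = f x * ((1 - s) ^ d)⁻¹ := by
      rw [integral_const_mul, integral_const_mul, integral_P w x hs0 (by linarith), hw.int1]
      have : (1 - s) ≠ 0 := by linarith
      rw [smul_eq_mul, mul_one, div_pow, ← hd]
      field_simp
    have i2 : Integrable (fun y => f x * ((s ^ d)⁻¹ * w (P s x y))) := (i0.const_mul _).const_mul _
    have i1 : Integrable (fun y => f y * ((s ^ d)⁻¹ * w (P s x y))) := by
      apply Continuous.integrable_of_hasCompactSupport
      · unfold P; fun_prop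
      · apply HasCompactSupport.intro (isCompact_closedBall (0:E) R)
        intro y hy
        rw [hf.z y (by simpa using hy), zero_mul]
    rw [← e1]
    unfold Av
    rw [← integral_sub i1 i2]
    have h := norm_integral_ball_le
      (fun y => f y * ((s ^ d)⁻¹ * w (P s x y)) - f x * ((s ^ d)⁻¹ * w (P s x y))) x
      (A := N * (2 * (R + ‖x‖) * s) ^ α * ((s ^ d)⁻¹ * W)) (r := 2 * (R + ‖x‖) * s)
      (by positivity) ?_ ?_
    · refine h.trans (le_of_eq ?_)
      rw [← hd, mul_pow _ s d]
      field_simp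
    · intro y hy
      rw [← sub_mul, norm_mul, norm_mul, norm_inv, norm_pow, Real.norm_of_nonneg hs0.le]
      gcongr
      · refine (hf.h y x).trans ?_
        rw [norm_sub_rev]
        gcongr
        exact hf.a0.le
      · exact hw.b0 _
    · intro y hy
      rw [hw.z0]
      · simp
      by_contra! hc
      have := supp3 hs0 hs2.le hc (le_refl ‖x‖)
      linarith
  have t1 : Tendsto (fun s : ℝ => N * W * (V E * (2 * (R + ‖x‖)) ^ d) * (2 * (R + ‖x‖) * s) ^ α)
      (𝓝[>] 0) (𝓝 0) := by
    have c : Continuous (fun s : ℝ => N * W * (V E * (2 * (R + ‖x‖)) ^ d) * (2 * (R + ‖x‖) * s) ^ α) := by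
      apply Continuous.mul continuous_const
      exact Continuous.rpow_const (by fun_prop) (fun _ => Or.inr hf.a0.le)
    have := c.tendsto 0
    simp only [mul_zero, Real.zero_rpow hf.a0.ne'] at this
    exact this.mono_left nhdsWithin_le_nhds
  have t2 : Tendsto (fun s => Av w f x s - f x * ((1 - s) ^ d)⁻¹) (𝓝[>] 0) (𝓝 0) := by
    apply squeeze_zero_norm' _ t1
    filter_upwards [Ioo_mem_nhdsGT (show (0:ℝ) < 1/2 by norm_num)] with s hs using key s hs
  have t3 : Tendsto (fun s : ℝ => f x * ((1 - s) ^ d)⁻¹) (𝓝[>] 0) (𝓝 (f x)) := by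
    have c : ContinuousAt (fun s : ℝ => f x * ((1 - s) ^ d)⁻¹) 0 := by
      apply ContinuousAt.mul continuousAt_const
      apply ContinuousAt.inv₀ (by fun_prop)
      simp
    have := c.tendsto
    simp only [sub_zero, one_pow, inv_one, mul_one] at this
    exact this.mono_left nhdsWithin_le_nhds
  simpa using t2.add t3

theorem div_BDU (hw : WGood w R W) (hf : FGood f R N α) (τ : (E →L[ℝ] E) →L[ℝ] ℝ) (h1 : ∀ (l : E →L[ℝ] ℝ) (v : E), τ (l.smulRight v) = l v) (h2 : τ (ContinuousLinearMap.id ℝ E) = finrank ℝ E)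
    (hmean : ∫ y, f y = 0) (x : E) : τ (BDU w f x) = f x := by
  have hI := DU_integrable hw hf x
  have e0 : τ (BDU w f x) = ∫ s in Ioo (0:ℝ) 1, τ ((s ^ (finrank ℝ E + 1))⁻¹ • DU w f s x) :=
    (τ.integral_comp_comm hI).symm
  have hI2 : IntegrableOn (fun s : ℝ => -(τ ((s ^ (finrank ℝ E + 1))⁻¹ • DU w f s x))) (Ioo 0 1) :=
    (τ.integrable_comp hI).neg
  have t1 : Tendsto (Av w f x) (𝓝[<] 1) (𝓝 0) := by
    have c := (Av_hasDerivAt hw hf τ h1 h2 x one_pos).continuousAt.tendsto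
    have e : Av w f x 1 = 0 := by
      have : ∀ y, P 1 x y = x := by intro y; simp [P]
      simp only [Av, this]
      rw [integral_mul_const, hmean, zero_mul]
    rw [e] at c
    exact c.mono_left nhdsWithin_le_nhds
  have h := intervalIntegral.integral_eq_sub_of_hasDerivAt_of_tendsto (a := 0) (b := 1) one_pos
    (fun s hs => Av_hasDerivAt' hw hf τ h1 h2 x hs.1 hs.2)
    ((intervalIntegrable_iff_integrableOn_Ioo_of_le zero_le_one).2 hI2)
    (Av_tendsto hw hf x) t1
  rw [intervalIntegral.integral_of_le zero_le_one, integral_Ioc_eq_integral_Ioo, integral_neg] at h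
  rw [e0]
  linarith
end
end Bog

namespace Bog
open Module

theorem exists_WGood {E : Type*} [NormedAddCommGroup E] [InnerProductSpace ℝ E]
    [FiniteDimensional ℝ E] [MeasurableSpace E] [BorelSpace E]
    (w : E → ℝ) (hw : ContDiff ℝ (⊤ : ℕ∞) w) (hc : HasCompactSupport w) (R : ℝ) (hR : 1 ≤ R)
    (hz : ∀ p ∈ tsupport w, ‖p‖ ≤ R) (hmean : ∫ p, w p = 1) : ∃ W, WGood w R W := by
  have h1 : ContDiff ℝ 1 w := hw.of_le (by exact_mod_cast le_top)
  have hd : ContDiff ℝ 1 (fderiv ℝ w) := hw.fderiv_right (m := 1) (by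
    have h2 : ((2 : ℕ∞) : WithTop ℕ∞) ≤ ((⊤ : ℕ∞) : WithTop ℕ∞) := by exact_mod_cast le_top
    exact le_trans (by norm_num) h2)
  have hdc : HasCompactSupport (fderiv ℝ w) := hc.fderiv ℝ
  obtain ⟨K0, hK0⟩ := ContDiff.lipschitzWith_of_hasCompactSupport hc h1 (by simp)
  obtain ⟨K1, hK1⟩ := ContDiff.lipschitzWith_of_hasCompactSupport hdc hd (by simp)
  obtain ⟨A, hA⟩ := hc.exists_bound_of_continuous h1.continuous
  obtain ⟨A', hA'⟩ := hdc.exists_bound_of_continuous hd.continuous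
  set W := 1 + |A| + |A'| + K0 + K1 with hWd
  have k0 := K0.2
  have k1 := K1.2
  have a0 := abs_nonneg A
  have a1 := abs_nonneg A'
  have a2 := le_abs_self A
  have a3 := le_abs_self A'
  refine ⟨W, hR, ?_, h1, ?_, ?_, ?_, ?_, ?_, ?_, hmean⟩
  · show 1 ≤ 1 + |A| + |A'| + K0 + K1
    have := K0.2; have := K1.2
    linarith [NNReal.coe_nonneg K0, NNReal.coe_nonneg K1]
  · intro p
    have := hA p
    rw [Real.norm_eq_abs] at this
    linarith [NNReal.coe_nonneg K0, NNReal.coe_nonneg K1]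
  · intro p
    have := hA' p
    linarith [NNReal.coe_nonneg K0, NNReal.coe_nonneg K1]
  · intro p q
    have := hK0.dist_le_mul p q
    rw [Real.dist_eq, dist_eq_norm] at this
    refine this.trans (mul_le_mul_of_nonneg_right ?_ (norm_nonneg _))
    linarith [NNReal.coe_nonneg K0, NNReal.coe_nonneg K1]
  · intro p q
    have := hK1.dist_le_mul p q
    rw [dist_eq_norm, dist_eq_norm] at this
    refine this.trans (mul_le_mul_of_nonneg_right ?_ (norm_nonneg _))
    linarith [NNReal.coe_nonneg K0, NNReal.coe_nonneg K1]
  · intro p hp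
    exact image_eq_zero_of_notMem_tsupport fun h => absurd (hz p h) (not_le.2 hp)
  · intro p hp
    have : p ∉ tsupport (fderiv ℝ w) :=
      fun h => absurd (hz p (tsupport_fderiv_subset ℝ h)) (not_le.2 hp)
    exact image_eq_zero_of_notMem_tsupport this

theorem zero_off {E : Type*} [NormedAddCommGroup E] [InnerProductSpace ℝ E]
    (Ω : Set E) (c : E) (r : ℝ) (hr : 0 < r)
    (hstar : ∀ x ∈ Ω, ∀ y ∈ ball c r, segment ℝ x y ⊆ Ω) (f : E → ℝ) (hf : Continuous f)
    (hs : tsupport f ⊆ closure Ω) (x : E) (hx : x ∉ Ω) : f x = 0 := by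
  have key : ∀ t : ℝ, 0 < t → f (x + t • (x - c)) = 0 := by
    intro t ht
    by_contra hne
    have hq : x + t • (x - c) ∈ closure Ω := hs (subset_tsupport f hne)
    rw [Metric.mem_closure_iff] at hq
    obtain ⟨y, hy, hd⟩ := hq (t * r) (by positivity)
    -- `p = (1 + 1/t) x - y / t`
    have hp : x + t⁻¹ • (x - y) ∈ ball c r := by
      rw [mem_ball, dist_eq_norm]
      have : x + t⁻¹ • (x - y) - c = t⁻¹ • (x + t • (x - c) - y) := by
        have : t ≠ 0 := ht.ne'
        match_scalars <;> field_simp <;> ring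
      rw [this, norm_smul, norm_inv, Real.norm_of_nonneg ht.le, ← dist_eq_norm,
        inv_mul_lt_iff₀ ht]
      exact hd
    apply hx
    apply hstar y hy _ hp
    refine ⟨1 / (1 + t), t / (1 + t), by positivity, by positivity, by field_simp, ?_⟩
    have : t ≠ 0 := ht.ne'
    match_scalars <;> field_simp <;> ring
  have hc : Tendsto (fun t : ℝ => f (x + t • (x - c))) (𝓝[>] 0) (𝓝 (f x)) := by
    have : Continuous fun t : ℝ => f (x + t • (x - c)) := by fun_prop
    have h := this.tendsto 0
    simp only [zero_smul, add_zero] at h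
    exact h.mono_left nhdsWithin_le_nhds
  have h0 : Tendsto (fun t : ℝ => f (x + t • (x - c))) (𝓝[>] 0) (𝓝 0) := by
    refine tendsto_const_nhds.congr' ?_
    filter_upwards [self_mem_nhdsWithin] with t ht
    exact (key t ht).symm
  exact tendsto_nhds_unique hc h0

theorem lambda_facts (n : ℕ) (α : ℝ) (hα : 0 < α) (f : EuclideanSpace ℝ (Fin n) → ℝ)
    (hM : ∃ M : ℝ, ∀ x, |f x| ≤ M) (hK : ∃ K : ℝ, ∀ x y, |f x - f y| ≤ K * ‖x - y‖ ^ α) :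
    0 ≤ lambdaNorm n α f ∧ (∀ x, |f x| ≤ lambdaNorm n α f) ∧
      ∀ x y, |f x - f y| ≤ lambdaNorm n α f * ‖x - y‖ ^ α := by
  obtain ⟨M, hM⟩ := hM
  obtain ⟨K, hK⟩ := hK
  have s0 : 0 ≤ ⨆ x : EuclideanSpace ℝ (Fin n), |f x| := Real.iSup_nonneg fun x => abs_nonneg _
  have s1 : 0 ≤ ⨆ p : {p : EuclideanSpace ℝ (Fin n) × EuclideanSpace ℝ (Fin n) // p.1 ≠ p.2},
    |f p.1.1 - f p.1.2| / ‖p.1.1 - p.1.2‖ ^ α := Real.iSup_nonneg fun p => by positivity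
  have b0 : ∀ x, |f x| ≤ ⨆ x : EuclideanSpace ℝ (Fin n), |f x| := fun x =>
    le_ciSup (f := fun x => |f x|) ⟨M, by rintro _ ⟨x, rfl⟩; exact hM x⟩ x
  refine ⟨add_nonneg s0 s1, fun x => (b0 x).trans (le_add_of_nonneg_right s1), fun x y => ?_⟩
  rcases eq_or_ne x y with rfl | hxy
  · simp [Real.zero_rpow hα.ne']
  have hp : 0 < ‖x - y‖ ^ α := Real.rpow_pos_of_pos (norm_pos_iff.2 (sub_ne_zero.2 hxy)) _
  rw [← div_le_iff₀ hp]
  refine le_trans ?_ (le_add_of_nonneg_left s0)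
  refine le_ciSup (f := fun p : {p : EuclideanSpace ℝ (Fin n) × EuclideanSpace ℝ (Fin n) //
    p.1 ≠ p.2} => |f p.1.1 - f p.1.2| / ‖p.1.1 - p.1.2‖ ^ α) ⟨K, ?_⟩ ⟨(x, y), hxy⟩
  rintro _ ⟨⟨p, h⟩, rfl⟩
  have hp' : 0 < ‖p.1 - p.2‖ ^ α := Real.rpow_pos_of_pos (norm_pos_iff.2 (sub_ne_zero.2 h)) _
  exact (div_le_iff₀ hp').2 (hK _ _)

theorem lambda_le (n : ℕ) (α : ℝ) (g : EuclideanSpace ℝ (Fin n) → ℝ) (a b : ℝ)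
    (ha : 0 ≤ a) (hb : 0 ≤ b) (h0 : ∀ x, |g x| ≤ a)
    (h1 : ∀ x y, |g x - g y| ≤ b * ‖x - y‖ ^ α) : lambdaNorm n α g ≤ a + b := by
  refine add_le_add (Real.iSup_le h0 ha) (Real.iSup_le ?_ hb)
  rintro ⟨p, h⟩
  have hp' : 0 < ‖p.1 - p.2‖ ^ α := Real.rpow_pos_of_pos (norm_pos_iff.2 (sub_ne_zero.2 h)) _
  exact (div_le_iff₀ hp').2 (h1 _ _)

/-- Trace functional on continuous endomorphisms. -/
noncomputable def trc (n : ℕ) :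
    (EuclideanSpace ℝ (Fin n) →L[ℝ] EuclideanSpace ℝ (Fin n)) →L[ℝ] ℝ :=
  ∑ i, (EuclideanSpace.proj i : EuclideanSpace ℝ (Fin n) →L[ℝ] ℝ).comp
    (ContinuousLinearMap.apply ℝ _ (EuclideanSpace.single i (1:ℝ)))

theorem trc_apply (n : ℕ) (L : EuclideanSpace ℝ (Fin n) →L[ℝ] EuclideanSpace ℝ (Fin n)) :
    trc n L = ∑ i, L (EuclideanSpace.single i 1) i := by
  simp [trc]

theorem trc_smulRight (n : ℕ) (l : EuclideanSpace ℝ (Fin n) →L[ℝ] ℝ) (v) :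
    trc n (l.smulRight v) = l v := by
  rw [trc_apply]
  have hv : v = ∑ i, v i • EuclideanSpace.single i (1:ℝ) := by
    ext j
    simp [Finset.sum_apply, Pi.single_apply]
  conv_rhs => rw [hv]
  rw [map_sum]
  refine Finset.sum_congr rfl fun i _ => ?_
  simp [mul_comm]

theorem trc_id (n : ℕ) : trc n (ContinuousLinearMap.id ℝ _) =
    finrank ℝ (EuclideanSpace ℝ (Fin n)) := by
  rw [trc_apply]
  simp

end Bog

/-- For `0 < α < 1` and `f ∈ Λ_α(ℝⁿ)` supported in the closure of the
star-shaped domain `Ω` with zero integral, the Bogovskiĭ field `u` is `C¹`, vanishes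
outside the closure of `Ω`, solves `div u = f` on `Ω`, and its first derivatives are
bounded in the `Λ_α` norm by the `Λ_α` norm of `f`. -/
theorem bogovskii_lipschitz_estimate
    (n : ℕ) (hn : 2 ≤ n)
    (Ω B : Set (EuclideanSpace ℝ (Fin n)))
    (hΩo : IsOpen Ω) (hΩb : Bornology.IsBounded Ω)
    (hBball : ∃ c r, 0 < r ∧ B = Metric.ball c r)
    (hBΩ : B ⊆ Ω)
    (hstar : ∀ x ∈ Ω, ∀ y ∈ B, segment ℝ x y ⊆ Ω)
    (ω : EuclideanSpace ℝ (Fin n) → ℝ)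
    (hω : ContDiff ℝ (⊤ : ℕ∞) ω) (hωc : HasCompactSupport ω)
    (hωsupp : tsupport ω ⊆ B) (hωint : ∫ x, ω x = 1)
    (G : EuclideanSpace ℝ (Fin n) → EuclideanSpace ℝ (Fin n) → EuclideanSpace ℝ (Fin n))
    (hG : ∀ x y, x ≠ y → G x y =
      ∫ s in Set.Ioo (0:ℝ) 1, ((s ^ n)⁻¹ * ω (y + s⁻¹ • (x - y))) • (s⁻¹ • (x - y)))
    (hGdiag : ∀ x, G x x = 0)
    (α : ℝ) (hα0 : 0 < α) (hα1 : α < 1) :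
    ∃ C : ℝ,
      ∀ f : EuclideanSpace ℝ (Fin n) → ℝ,
        Continuous f →
        (∃ M : ℝ, ∀ x, |f x| ≤ M) →
        (∃ K : ℝ, ∀ x y, |f x - f y| ≤ K * ‖x - y‖ ^ α) →
        tsupport f ⊆ closure Ω →
        (∫ x, f x) = 0 →
        ∀ u : EuclideanSpace ℝ (Fin n) → EuclideanSpace ℝ (Fin n),
          (∀ x, u x = ∫ y in Ω, f y • G x y) →
          ContDiff ℝ 1 u ∧
          (∀ x, x ∉ closure Ω → u x = 0) ∧
          (∀ x ∈ Ω, ∑ i, fderiv ℝ u x (EuclideanSpace.single i 1) i = f x) ∧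
          (∀ i j : Fin n,
            lambdaNorm n α (fun x => fderiv ℝ (fun x' => u x' i) x (EuclideanSpace.single j 1))
              ≤ C * lambdaNorm n α f) := by
  obtain ⟨c, r, hr, rfl⟩ := hBball
  obtain ⟨R0, hR0⟩ := hΩb.exists_norm_le
  obtain ⟨R, hR1, hR⟩ : ∃ R : ℝ, 1 ≤ R ∧ ∀ x ∈ Ω, ‖x‖ ≤ R :=
    ⟨max 1 R0, le_max_left _ _, fun x hx => (hR0 x hx).trans (le_max_right _ _)⟩
  obtain ⟨W, hw⟩ := Bog.exists_WGood ω hω hωc R hR1 (fun p hp => hR p (hBΩ (hωsupp hp))) hωint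
  have hGall : ∀ x y, G x y =
      ∫ s in Set.Ioo (0:ℝ) 1, ((s ^ n)⁻¹ * ω (y + s⁻¹ • (x - y))) • (s⁻¹ • (x - y)) := by
    intro x y
    rcases eq_or_ne x y with rfl | h
    · simp [hGdiag]
    · exact hG x y h
  have hG0 : ∀ x, x ∉ Ω → ∀ y ∈ Ω, G x y = 0 := by
    intro x hx y hy
    rw [hGall]
    apply setIntegral_eq_zero_of_forall_eq_zero
    intro s hs
    have hs0 : s ≠ 0 := hs.1.ne'
    have : ω (y + s⁻¹ • (x - y)) = 0 := by
      by_contra hne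
      apply hx
      apply hstar y hy _ (hωsupp (subset_tsupport ω hne))
      refine ⟨1 - s, s, by linarith [hs.2], hs.1.le, by ring, ?_⟩
      match_scalars <;> field_simp
      ring
    simp [this]
  set K := Bog.Cst (EuclideanSpace ℝ (Fin n)) R W with hKd
  have hK0 : 0 ≤ K := Bog.Cst_nonneg hw
  have hα' : 0 < 1 - α := by linarith
  refine ⟨K / α + K * (2 / α + 1 / (1 - α)), ?_⟩
  intro f hfc hM hH hsupp hmean u hu
  obtain ⟨hN, hb, hh⟩ := Bog.lambda_facts n α hα0 f hM hH
  have hf0 : ∀ x, x ∉ Ω → f x = 0 := fun x hx =>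
    Bog.zero_off Ω c r hr hstar f hfc hsupp x hx
  set N := lambdaNorm n α f with hNd
  have hf : Bog.FGood f R N α := ⟨hα0, hα1, hN, hfc, hb, hh, fun x hx =>
    hf0 x fun h => absurd (hR x h) (not_le.2 hx)⟩
  have huB : u = Bog.BU ω f := by
    funext x
    rw [hu, setIntegral_eq_integral_of_forall_compl_eq_zero, ← Bog.fubini hw hf x]
    · simp only [hGall, finrank_euclideanSpace_fin]
    · intro y hy
      rw [hf0 y hy, zero_smul]
  have hD : ∀ x, HasFDerivAt u (Bog.BDU ω f x) x := by
    intro x; rw [huB]; exact Bog.BU_hasFDerivAt hw hf x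
  refine ⟨huB ▸ Bog.BU_contDiff hw hf, ?_, ?_, ?_⟩
  · intro x hx
    rw [hu]
    apply setIntegral_eq_zero_of_forall_eq_zero
    intro y hy
    rw [hG0 x (fun h => hx (subset_closure h)) y hy, smul_zero]
  · intro x _
    rw [(hD x).fderiv, ← Bog.trc_apply]
    exact Bog.div_BDU hw hf _ (Bog.trc_smulRight n) (Bog.trc_id n) hmean x
  · intro i j
    have hd : ∀ x, fderiv ℝ (fun x' => u x' i) x (EuclideanSpace.single j 1)
        = Bog.BDU ω f x (EuclideanSpace.single j 1) i := by
      intro x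
      have h := ((EuclideanSpace.proj i : EuclideanSpace ℝ (Fin n) →L[ℝ] ℝ).hasFDerivAt
        (x := u x)).comp x (hD x)
      have h2 : fderiv ℝ (fun x' => u x' i) x = _ := h.fderiv
      rw [h2]
      rfl
    have hcomp : ∀ L : EuclideanSpace ℝ (Fin n) →L[ℝ] EuclideanSpace ℝ (Fin n),
        |L (EuclideanSpace.single j 1) i| ≤ ‖L‖ := by
      intro L
      have h1 := PiLp.norm_apply_le (L (EuclideanSpace.single j (1:ℝ))) i
      have h2 := L.le_opNorm (EuclideanSpace.single j (1:ℝ))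
      rw [Real.norm_eq_abs] at h1
      have h3 : ‖EuclideanSpace.single j (1:ℝ)‖ = 1 := by simp
      rw [h3, mul_one] at h2
      exact h1.trans h2
    simp only [hd]
    have := Bog.lambda_le n α (fun x => Bog.BDU ω f x (EuclideanSpace.single j 1) i)
      (K * N / α) (K * N * (2 / α + 1 / (1 - α))) (by positivity) (by positivity)
      (fun x => (hcomp _).trans (Bog.BDU_bound hw hf x))
      (fun x y => by
        have h := (hcomp (Bog.BDU ω f x - Bog.BDU ω f y)).trans (Bog.BDU_holder hw hf x y)
        simpa using h)
    refine this.trans (le_of_eq ?_)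
    ring
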